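/- In any 8-schedule of the RAI instance I', for each j∈[n] and t∈[4], the gateway jobs GJob(j,t,⊤) and GJob(j,t,⊥) are assigned to their first or last eligible machine, i.e., to BGMach(j,t) or FGMach(j,t), and each of these two machines receives exactly one of these two jobs. -/

import Mathlib

/-!
A gateway machine carries at most one gateway job: two of them have total size at least 8, and
the private load of the machine is positive (`gateway_job_inj`). The eligibility intervals of the
gateway jobs are nested: the interval of `(j,t)` consists exactly of the gateway machines of the
pairs up to `(j,t)` in the lexicographic order (`gateway_of_between`). By induction along this
order, the gateway machines of all smaller pairs are occupied by their own gateway jobs, so the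
two jobs of `(j,t)` must take the two machines of `(j,t)`, one each.
-/

open Finset

/-- A 3-SAT* instance: `n` variables, `2m` clauses of 3 literals each
(the first `m` are 1-in-3-clauses, the last `m` are 2-in-3-clauses).
`lit i s` is the literal at position `s` of clause `i`, given as a pair
(variable, polarity). The occurrence bijection `occ` maps the pair `(j,t)`
(the `t`-th occurrence of variable `x_j`, positive for `t = 0,1`, negative for
`t = 2,3`) to the corresponding (clause, position) pair; `occ_spec` says the
literal there is indeed `x_j` with the right polarity. Bijectivity of `occ`
encodes that every literal occurs exactly twice (and forces `6m = 4n`). -/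
structure SAT3Star where
  n : ℕ
  m : ℕ
  lit : Fin (2 * m) → Fin 3 → Fin n × Bool
  occ : (Fin n × Fin 4) ≃ (Fin (2 * m) × Fin 3)
  occ_spec : ∀ jt : Fin n × Fin 4,
    lit (occ jt).1 (occ jt).2 = (jt.1, decide ((jt.2 : ℕ) < 2))

/-- `α` satisfies the 3-SAT* instance: every `k`-in-3-clause has exactly `k`
true literals. -/
def SAT3Star.Satisfies (S : SAT3Star) (α : Fin S.n → Bool) : Prop :=
  ∀ i : Fin (2 * S.m),
    (Finset.univ.filter (fun s : Fin 3 => α (S.lit i s).1 = (S.lit i s).2)).card =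
      if (i : ℕ) < S.m then 1 else 2

/-- `⌊t/2⌋` as an element of `Fin 2`. -/
def half (t : Fin 4) : Fin 2 := ⟨(t : ℕ) / 2, by have := t.isLt; omega⟩

/-- Data of the bubble-sort process used in the reduction: `k` is the number of
transpositions, `φ ℓ p` is the position of the pair `p = (j,t)` in the sequence `φ_ℓ`
(each `φ ℓ` is a bijection onto `{0,…,4n-1}`), `φ 0` is the lexicographic order,
`φ k` is the order induced by the lexicographic order of `κ(j,t)`, and consecutive
sequences differ by one adjacent transposition swapping `big ℓ` (which moves right; this
is `ξ(ℓ)`) with `small ℓ`; each swapped pair is an inversion with respect to the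
lexicographic order of `κ`. -/
structure BubbleData (S : SAT3Star) where
  k : ℕ
  φ : Fin (k + 1) → (Fin S.n × Fin 4) → ℕ
  φ_lt : ∀ ℓ p, φ ℓ p < 4 * S.n
  φ_inj : ∀ ℓ, Function.Injective (φ ℓ)
  φ_zero : ∀ p : Fin S.n × Fin 4, φ 0 p = 4 * (p.1 : ℕ) + (p.2 : ℕ)
  φ_last : ∀ p : Fin S.n × Fin 4,
    φ (Fin.last k) p = 3 * ((S.occ p).1 : ℕ) + ((S.occ p).2 : ℕ)
  big : Fin k → Fin S.n × Fin 4
  small : Fin k → Fin S.n × Fin 4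
  step_adj : ∀ ℓ, φ ℓ.castSucc (small ℓ) = φ ℓ.castSucc (big ℓ) + 1
  step_big : ∀ ℓ, φ ℓ.succ (big ℓ) = φ ℓ.castSucc (big ℓ) + 1
  step_small : ∀ ℓ, φ ℓ.succ (small ℓ) = φ ℓ.castSucc (big ℓ)
  step_other : ∀ ℓ p, p ≠ big ℓ → p ≠ small ℓ → φ ℓ.succ p = φ ℓ.castSucc p
  step_inv : ∀ ℓ, ((S.occ (small ℓ)).1 : ℕ) < ((S.occ (big ℓ)).1 : ℕ) ∨
    ((S.occ (small ℓ)).1 = (S.occ (big ℓ)).1 ∧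
      ((S.occ (small ℓ)).2 : ℕ) < ((S.occ (big ℓ)).2 : ℕ))

/-- The machines of the RAI instance I'. -/
inductive IMach (n m k : ℕ) where
  | TMach : Fin n → Fin 2 → IMach n m k
  | BGMach : Fin n → Fin 4 → IMach n m k
  | FGMach : Fin n → Fin 4 → IMach n m k
  | BSMach : Fin k → Fin n → Fin 4 → IMach n m k
  | FSMach : Fin k → Fin n → Fin 4 → IMach n m k
  | CMach : Fin (2 * m) → Fin 3 → IMach n m k
  deriving DecidableEq, Fintype

/-- The jobs of the RAI instance I'; `PJob M` is the private load of machine `M`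
(of size 0 on the machines that carry no private load). -/
inductive IJob (n m k : ℕ) where
  | TJob : Fin n → IJob n m k
  | VJob : Fin n → Fin 4 → Bool → IJob n m k
  | GJob : Fin n → Fin 4 → Bool → IJob n m k
  | BJob : Fin (k + 1) → Fin n → Fin 4 → Bool → IJob n m k
  | SJob : Fin k → Fin n → Fin 4 → Bool → IJob n m k
  | CJob : Fin (2 * m) → Fin 3 → IJob n m k
  | PJob : IMach n m k → IJob n m k
  deriving DecidableEq, Fintype

variable (S : SAT3Star) (B : BubbleData S)

/-- Position of a machine in the left-to-right order of I'. -/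
def mpos : IMach S.n S.m B.k → ℕ
  | .TMach j q => 2 * (j : ℕ) + (q : ℕ)
  | .BGMach j t => 2 * S.n + (4 * S.n - 1 - (4 * (j : ℕ) + (t : ℕ)))
  | .FGMach j t => 6 * S.n + (4 * (j : ℕ) + (t : ℕ))
  | .BSMach ℓ j t =>
      10 * S.n + 8 * S.n * (ℓ : ℕ) + (4 * S.n - 1 - B.φ ℓ.castSucc (j, t))
  | .FSMach ℓ j t => 10 * S.n + 8 * S.n * (ℓ : ℕ) + 4 * S.n + B.φ ℓ.succ (j, t)
  | .CMach i s => 10 * S.n + 8 * S.n * B.k + (6 * S.m - 1 - (3 * (i : ℕ) + (s : ℕ)))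

/-- Size of the private load of a machine (0 where there is none). -/
def psize : IMach S.n S.m B.k → ℕ
  | .TMach _ _ => 2
  | .BGMach _ _ => 1
  | .FGMach _ _ => 2
  | .BSMach ℓ j t => if (j, t) = B.big ℓ then 3 else 0
  | .FSMach ℓ j t => if (j, t) = B.big ℓ then 3 else 0
  | .CMach _ _ => 0

/-- Sizes of the jobs of I'. -/
def jsize : IJob S.n S.m B.k → ℕ
  | .TJob _ => 2
  | .VJob _ _ b => if b then 3 else 2
  | .GJob _ _ b => if b then 4 else 5
  | .BJob _ _ _ b => if b then 2 else 1
  | .SJob ℓ j t b =>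
      if (j, t) = B.big ℓ then (if b then 3 else 4) else (if b then 6 else 7)
  | .CJob i s =>
      if (s : ℕ) = 0 then 6
      else if (s : ℕ) = 1 then 7
      else if (i : ℕ) < S.m then 7 else 6
  | .PJob M => psize S B M

/-- The first (left-most) eligible machine of a job. -/
def firstM : IJob S.n S.m B.k → IMach S.n S.m B.k
  | .TJob j => .TMach j 0
  | .VJob j t _ => .TMach j ⟨(t : ℕ) / 2, by have := t.isLt; omega⟩
  | .GJob j t _ => .BGMach j t
  | .BJob ℓ j t _ =>
      if h : (ℓ : ℕ) = 0 then .FGMach j t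
      else .FSMach ⟨(ℓ : ℕ) - 1, by have := ℓ.isLt; omega⟩ j t
  | .SJob ℓ j t _ => .BSMach ℓ j t
  | .CJob i _ => .CMach i 2
  | .PJob M => M

/-- The last (right-most) eligible machine of a job. -/
def lastM : IJob S.n S.m B.k → IMach S.n S.m B.k
  | .TJob j => .TMach j 1
  | .VJob j t _ => .BGMach j t
  | .GJob j t _ => .FGMach j t
  | .BJob ℓ j t _ =>
      if h : (ℓ : ℕ) < B.k then .BSMach ⟨(ℓ : ℕ), h⟩ j t
      else .CMach (S.occ (j, t)).1 (S.occ (j, t)).2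
  | .SJob ℓ j t _ => .FSMach ℓ j t
  | .CJob i _ => .CMach i 0
  | .PJob M => M

/-- A job is eligible exactly on the machines lying (in the machine order) between its
first and its last eligible machine. -/
def ielig (job : IJob S.n S.m B.k) (M : IMach S.n S.m B.k) : Prop :=
  mpos S B (firstM S B job) ≤ mpos S B M ∧ mpos S B M ≤ mpos S B (lastM S B job)

/-- Load of a machine under a schedule. -/
def iload (σ : IJob S.n S.m B.k → IMach S.n S.m B.k) (M : IMach S.n S.m B.k) : ℕ :=
  ∑ j ∈ Finset.univ.filter (fun j => σ j = M), jsize S B j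

/-- An 8-schedule: every job on an eligible machine, every machine with load exactly 8. -/
def EightSchedule (σ : IJob S.n S.m B.k → IMach S.n S.m B.k) : Prop :=
  (∀ j, ielig S B j (σ j)) ∧ ∀ M, iload S B σ M = 8

/-- A machine lying between `BGMach(j,t)` and `FGMach(j,t)` is a gateway machine of a pair that
is lexicographically at most `(j,t)` (encoded as `4j + t`): the backward gateways are ordered
decreasingly and the forward ones increasingly, so these intervals are nested. -/
lemma gateway_of_between (M : IMach S.n S.m B.k) (j : Fin S.n) (t : Fin 4)
    (h1 : mpos S B (.BGMach j t) ≤ mpos S B M) (h2 : mpos S B M ≤ mpos S B (.FGMach j t)) :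
    ∃ (j' : Fin S.n) (t' : Fin 4), (M = .BGMach j' t' ∨ M = .FGMach j' t') ∧
      4 * (j' : ℕ) + (t' : ℕ) ≤ 4 * (j : ℕ) + (t : ℕ) := by
  have hj := j.isLt
  have ht := t.isLt
  cases M with
  | TMach a q => simp only [mpos] at h1; omega
  | BGMach a b =>
    refine ⟨a, b, Or.inl rfl, ?_⟩
    simp only [mpos] at h1
    omega
  | FGMach a b =>
    refine ⟨a, b, Or.inr rfl, ?_⟩
    simp only [mpos] at h2
    omega
  | BSMach l a b => simp only [mpos] at h2; omega
  | FSMach l a b => simp only [mpos] at h2; omega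
  | CMach a s => simp only [mpos] at h2; omega

/-- Equality of pairs can be tested on their lexicographic rank `4j + t`. -/
lemma pair_eq_of_rank_eq {n : ℕ} {j j' : Fin n} {t t' : Fin 4}
    (h : 4 * (j : ℕ) + (t : ℕ) = 4 * (j' : ℕ) + (t' : ℕ)) : j = j' ∧ t = t' := by
  constructor <;> apply Fin.ext <;> omega

lemma private_gateway (σ : IJob S.n S.m B.k → IMach S.n S.m B.k)
    (h : EightSchedule S B σ) (M : IMach S.n S.m B.k) (j : Fin S.n) (t : Fin 4)
    (hM : M = .BGMach j t ∨ M = .FGMach j t) : σ (.PJob M) = M := by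
  obtain ⟨e1, e2⟩ := h.1 (.PJob M)
  simp only [firstM, lastM] at e1 e2
  have hj := j.isLt
  have ht := t.isLt
  have hb : mpos S B (.BGMach j t) ≤ mpos S B M ∧ mpos S B M ≤ mpos S B (.FGMach j t) := by
    rcases hM with rfl | rfl <;> simp only [mpos] <;> omega
  obtain ⟨j', t', h', -⟩ := gateway_of_between S B (σ (.PJob M)) j t (hb.1.trans e1) (e2.trans hb.2)
  have hj' := j'.isLt
  have ht' := t'.isLt
  rcases hM with rfl | rfl <;> rcases h' with h' | h' <;> rw [h'] at e1 e2 ⊢ <;>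
    simp only [mpos] at e1 e2
  · obtain ⟨rfl, rfl⟩ := pair_eq_of_rank_eq
      (show 4 * (j : ℕ) + (t : ℕ) = 4 * (j' : ℕ) + (t' : ℕ) by omega)
    rfl
  · omega
  · omega
  · obtain ⟨rfl, rfl⟩ := pair_eq_of_rank_eq
      (show 4 * (j : ℕ) + (t : ℕ) = 4 * (j' : ℕ) + (t' : ℕ) by omega)
    rfl

/-- No machine carries two gateway jobs: each has size at least 4, and a gateway machine has a
private load of at least 1, so the load would exceed 8. -/
lemma gateway_job_inj (σ : IJob S.n S.m B.k → IMach S.n S.m B.k)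
    (h : EightSchedule S B σ) (j j' : Fin S.n) (t t' : Fin 4) (b b' : Bool)
    (he : σ (.GJob j t b) = σ (.GJob j' t' b')) :
    (IJob.GJob j t b : IJob S.n S.m B.k) = .GJob j' t' b' := by
  by_contra hne
  obtain ⟨e1, e2⟩ := h.1 (.GJob j t b)
  obtain ⟨a, c, hM, -⟩ := gateway_of_between S B _ j t e1 e2
  generalize hMdef : σ (.GJob j t b) = M at he hM
  have hp := private_gateway S B σ h M a c hM
  have hl := h.2 M
  have hsub : ({.GJob j t b, .GJob j' t' b', .PJob M} : Finset (IJob S.n S.m B.k)) ⊆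
      Finset.univ.filter (fun x => σ x = M) := by
    intro x hx
    simp only [Finset.mem_insert, Finset.mem_singleton] at hx
    rcases hx with rfl | rfl | rfl
    · simpa using hMdef
    · simpa using he.symm
    · simpa using hp
  have hle := Finset.sum_le_sum_of_subset (f := fun x => jsize S B x) hsub
  rw [Finset.sum_insert (by simpa using hne), Finset.sum_pair (by simp)] at hle
  unfold iload at hl
  rw [hl] at hle
  have h1 : 4 ≤ jsize S B (.GJob j t b) := by cases b <;> simp [jsize]
  have h2 : 4 ≤ jsize S B (.GJob j' t' b') := by cases b' <;> simp [jsize]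
  have h3 : 1 ≤ jsize S B (.PJob M) := by
    rcases hM with rfl | rfl <;> simp [jsize, psize]
  omega

/-- in any 8-schedule, the two gateway jobs `GJob(j,t,⊤)` and
`GJob(j,t,⊥)` go to `BGMach(j,t)` or `FGMach(j,t)`, one to each. -/
theorem statement15 (σ : IJob S.n S.m B.k → IMach S.n S.m B.k)
    (h : EightSchedule S B σ) (j : Fin S.n) (t : Fin 4) :
    (σ (.GJob j t true) = .BGMach j t ∧ σ (.GJob j t false) = .FGMach j t) ∨
    (σ (.GJob j t false) = .BGMach j t ∧ σ (.GJob j t true) = .FGMach j t) := by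
  -- Strong induction on the lexicographic rank of `(j,t)`.
  generalize hN : 4 * (j : ℕ) + (t : ℕ) = N
  induction N using Nat.strong_induction_on generalizing j t with
  | _ N ih =>
  have key : ∀ b : Bool, σ (.GJob j t b) = .BGMach j t ∨ σ (.GJob j t b) = .FGMach j t := by
    intro b
    obtain ⟨e1, e2⟩ := h.1 (.GJob j t b)
    obtain ⟨j', t', hM, hle⟩ := gateway_of_between S B _ j t e1 e2
    rcases Nat.lt_or_eq_of_le hle with hlt | heq
    · exfalso
      -- Both machines of the smaller pair `(j',t')` already carry a gateway job of that pair.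
      have hocc : ∃ b', σ (.GJob j' t' b') = σ (.GJob j t b) := by
        rcases ih _ (hN ▸ hlt) j' t' rfl with ⟨u, v⟩ | ⟨u, v⟩ <;> rcases hM with hM | hM <;>
          rw [hM]
        exacts [⟨_, u⟩, ⟨_, v⟩, ⟨_, u⟩, ⟨_, v⟩]
      obtain ⟨b', hb'⟩ := hocc
      have := gateway_job_inj S B σ h _ _ _ _ _ _ hb'
      simp only [IJob.GJob.injEq] at this
      obtain ⟨rfl, rfl, -⟩ := this
      exact lt_irrefl _ hlt
    · obtain ⟨rfl, rfl⟩ := pair_eq_of_rank_eq heq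
      exact hM
  have hne : σ (.GJob j t true) ≠ σ (.GJob j t false) := fun e => by
    simpa using gateway_job_inj S B σ h _ _ _ _ _ _ e
  rcases key true with u | u <;> rcases key false with v | v
  · exact absurd (u.trans v.symm) hne
  · exact Or.inl ⟨u, v⟩
  · exact Or.inr ⟨v, u⟩
  · exact absurd (u.trans v.symm) hne
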